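/- arXiv:2009.06582 — 2 statements merged into one kernel-verified Lean document; each statement's English description precedes it below -/
import Mathlib

section
/- Let C be a properly convex open cone in R^{n+1} and V the volume function on the dual cone C*. If ψ ∈ Fr(C*) (the frontier of the dual cone), then V(φ) → ∞ as φ → ψ. Consequently, for any q ∈ C, the restriction of V to the affine slice C*_q = {φ ∈ C* : φ(q) = 1} attains a unique minimum. -/
open MeasureTheory Pointwise Filter
open scoped RealInnerProductSpace

/-- A cone in `ℝ^{n+1}`: invariant under positive scaling. -/
def IsCone {n : ℕ} (C : Set (EuclideanSpace ℝ (Fin (n+1)))) : Prop :=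
  ∀ t : ℝ, 0 < t → t • C = C

/-- Sharpness: the closure of the cone contains no pair of antipodal nonzero vectors. -/
def IsSharp {n : ℕ} (C : Set (EuclideanSpace ℝ (Fin (n+1)))) : Prop :=
  ∀ v : EuclideanSpace ℝ (Fin (n+1)), v ≠ 0 → v ∈ closure C → -v ∉ closure C

/-- The open dual cone, identified with vectors via the inner product. -/
def DualCone {n : ℕ} (C : Set (EuclideanSpace ℝ (Fin (n+1)))) :
    Set (EuclideanSpace ℝ (Fin (n+1))) :=
  {v | ∀ x ∈ closure C, x ≠ 0 → 0 < ⟪x, v⟫}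

/-- The volume function `V(φ) = vol(C ∩ φ⁻¹((0,1]))`. -/
noncomputable def coneVolume {n : ℕ} (C : Set (EuclideanSpace ℝ (Fin (n+1))))
    (v : EuclideanSpace ℝ (Fin (n+1))) : ℝ :=
  (volume (C ∩ {x | ⟪x, v⟫ ∈ Set.Ioc (0:ℝ) 1})).toReal

section helpers
variable {n : ℕ} {C : Set (EuclideanSpace ℝ (Fin (n+1)))}

theorem cone_smul (hCc : IsCone C) {t : ℝ} (ht : 0 < t) {x} (hx : x ∈ C) : t • x ∈ C := by
  rw [← hCc t ht]; exact Set.smul_mem_smul_set hx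

theorem cone_smul_closure (hCc : IsCone C) {t : ℝ} (ht : 0 < t) {x} (hx : x ∈ closure C) :
    t • x ∈ closure C := by
  have h := closure_smul₀ t C
  rw [hCc t ht] at h
  rw [h]
  exact Set.smul_mem_smul_set hx

theorem cone_zero_notMem (hCo : IsOpen C) (hsharp : IsSharp C) : (0 : EuclideanSpace ℝ (Fin (n+1))) ∉ C := by
  intro h0
  obtain ⟨r, hr, hb⟩ := Metric.isOpen_iff.1 hCo 0 h0
  obtain ⟨e, he⟩ := exists_norm_eq (EuclideanSpace ℝ (Fin (n+1))) (by positivity : (0:ℝ) ≤ r / 2)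
  have hne : e ≠ 0 := by
    rintro rfl
    simp at he
    linarith
  refine hsharp e hne (subset_closure (hb ?_)) (subset_closure (hb ?_))
  · simp [he]; exact hr
  · simp [he]; exact hr

theorem cone_add (hCo : IsOpen C) (hCc : IsCone C) (hconv : Convex ℝ C) {x y}
    (hy : y ∈ C) (hx : x ∈ closure C) : y + x ∈ C := by
  have h := hconv.combo_interior_closure_mem_interior (x := (2:ℝ) • y) (y := (2:ℝ) • x)
    (by rw [hCo.interior_eq]; exact cone_smul hCc two_pos hy) (cone_smul_closure hCc two_pos hx)
    (a := 1/2) (b := 1/2) (by norm_num) (by norm_num) (by norm_num)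
  rw [hCo.interior_eq] at h
  simpa [smul_smul] using h

theorem dual_bound (hCc : IsCone C) {v} (hv : v ∈ DualCone C) :
    ∃ c > 0, ∀ x ∈ closure C, c * ‖x‖ ≤ ⟪x, v⟫ := by
  have hK : IsCompact (closure C ∩ Metric.sphere 0 1) :=
    (isCompact_sphere _ _).inter_left isClosed_closure
  have key : ∃ c > 0, ∀ x ∈ closure C ∩ Metric.sphere 0 1, c ≤ ⟪x, v⟫ := by
    rcases (closure C ∩ Metric.sphere 0 1).eq_empty_or_nonempty with h | h
    · exact ⟨1, one_pos, by simp [h]⟩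
    · obtain ⟨k, hk, hmin⟩ := hK.exists_isMinOn h
        (f := fun x => ⟪x, v⟫) (by fun_prop)
      refine ⟨⟪k, v⟫, hv k hk.1 ?_, fun x hx => hmin hx⟩
      rintro rfl
      simpa using hk.2
  obtain ⟨c, hc, h⟩ := key
  refine ⟨c, hc, fun x hx => ?_⟩
  by_cases hx0 : x = 0
  · simp [hx0]
  have hn : 0 < ‖x‖ := norm_pos_iff.2 hx0
  have := h (‖x‖⁻¹ • x) ⟨cone_smul_closure hCc (by positivity) hx, by
    simp [norm_smul, hn.ne']⟩
  rw [real_inner_smul_left] at this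
  rw [inv_mul_eq_div, le_div_iff₀ hn] at this
  exact this

theorem dual_open (hCc : IsCone C) : IsOpen (DualCone C) := by
  rw [Metric.isOpen_iff]
  intro v hv
  obtain ⟨c, hc, h⟩ := dual_bound hCc hv
  refine ⟨c, hc, fun w hw x hx hx0 => ?_⟩
  have hn : 0 < ‖x‖ := norm_pos_iff.2 hx0
  have h1 := h x hx
  have h2 : ⟪x, w⟫ = ⟪x, v⟫ + ⟪x, w - v⟫ := by rw [← inner_add_right]; simp
  have h3 := (abs_le.1 (abs_real_inner_le_norm x (w - v))).1
  have h4 : ‖w - v‖ < c := by simpa [dist_eq_norm] using hw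
  rw [h2]
  nlinarith

theorem dual_convex : Convex ℝ (DualCone C) := by
  intro v hv w hw a b ha hb hab x hx hx0
  have h1 := hv x hx hx0
  have h2 := hw x hx hx0
  rw [inner_add_right, inner_smul_right, inner_smul_right]
  rcases ha.eq_or_lt with rfl | ha
  · simp at hab; subst hab; simpa using h2
  · have := mul_pos ha h1
    have := mul_nonneg hb h2.le
    linarith

theorem dual_nonempty (hCc : IsCone C) (hconv : Convex ℝ C) (hsharp : IsSharp C)
    (hne : C.Nonempty) : (DualCone C).Nonempty := by
  have hK : IsCompact (closure C ∩ Metric.sphere 0 1) :=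
    (isCompact_sphere _ _).inter_left isClosed_closure
  set D : Set (EuclideanSpace ℝ (Fin (n+1))) := {v | ∀ x ∈ closure C, 0 ≤ ⟪x, v⟫} with hD
  have hsep : ∀ x ∈ closure C, x ≠ 0 → ∃ v ∈ D, 0 < ⟪x, v⟫ := by
    intro x hx hx0
    obtain ⟨f, u, hu, hf⟩ := geometric_hahn_banach_point_closed hconv.closure
      isClosed_closure (hsharp x hx0 hx)
    have hpos : ∀ y ∈ closure C, 0 ≤ f y := by
      intro y hy
      by_contra hneg
      push Not at hneg
      have hlt : 0 < (|u| + 1) / (- f y) := by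
        apply div_pos (by positivity); linarith
      have h := hf _ (cone_smul_closure hCc hlt hy)
      rw [map_smul, smul_eq_mul] at h
      have h2 : (|u| + 1) / (- f y) * f y = -(|u| + 1) := by
        have : f y ≠ 0 := hneg.ne
        field_simp
      rw [h2] at h
      linarith [neg_abs_le u]
    have hu0 : u ≤ 0 := by
      obtain ⟨y, hy⟩ := hne
      by_contra hup
      push Not at hup
      have hy' := subset_closure hy
      have hfy : 0 < f y := hup.trans (hf y hy')
      have h := hf _ (cone_smul_closure hCc (t := u / (2 * f y)) (by positivity) hy')
      rw [map_smul, smul_eq_mul] at h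
      have h2 : u / (2 * f y) * f y = u / 2 := by field_simp
      linarith
    refine ⟨(InnerProductSpace.toDual ℝ _).symm f, fun y hy => ?_, ?_⟩
    · rw [real_inner_comm, InnerProductSpace.toDual_symm_apply]; exact hpos y hy
    · rw [real_inner_comm, InnerProductSpace.toDual_symm_apply]
      rw [map_neg] at hu
      linarith
  obtain ⟨t, ht⟩ := hK.elim_finite_subcover (fun v : D => {x | 0 < ⟪x, (v : EuclideanSpace ℝ (Fin (n+1)))⟫})
    (fun v => isOpen_lt continuous_const (by fun_prop)) (by
      rintro x ⟨hx, hx1⟩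
      obtain ⟨v, hv, hxv⟩ := hsep x hx (by rintro rfl; simp at hx1)
      exact Set.mem_iUnion.2 ⟨⟨v, hv⟩, hxv⟩)
  refine ⟨∑ v ∈ t, (v : EuclideanSpace ℝ (Fin (n+1))), fun x hx hx0 => ?_⟩
  have hn : 0 < ‖x‖ := norm_pos_iff.2 hx0
  obtain ⟨v, hvt, hv⟩ := Set.mem_iUnion₂.1 (ht ⟨cone_smul_closure hCc (t := ‖x‖⁻¹) (by positivity) hx, by
    simp [norm_smul, hn.ne']⟩)
  have hv' : 0 < ‖x‖⁻¹ * ⟪x, (v : EuclideanSpace ℝ (Fin (n+1)))⟫ := by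
    rw [← real_inner_smul_left]; exact hv
  rw [inner_sum]
  exact Finset.sum_pos' (fun w _ => w.2 x hx)
    ⟨v, hvt, (pos_iff_pos_of_mul_pos hv').1 (by positivity)⟩

theorem sublevel_eq (hCo : IsOpen C) (hsharp : IsSharp C) {v} (hv : v ∈ DualCone C) :
    C ∩ {x | ⟪x, v⟫ ∈ Set.Ioc (0:ℝ) 1} = C ∩ {x | ⟪x, v⟫ ≤ 1} := by
  ext x
  simp only [Set.mem_inter_iff, Set.mem_ofPred_eq, Set.mem_Ioc]
  refine ⟨fun h => ⟨h.1, h.2.2⟩, fun h => ⟨h.1, hv x (subset_closure h.1) ?_, h.2⟩⟩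
  rintro rfl
  exact cone_zero_notMem hCo hsharp h.1

theorem sublevel_finite (hCc : IsCone C) {v} (hv : v ∈ DualCone C) :
    volume (C ∩ {x | ⟪x, v⟫ ≤ 1}) < ⊤ := by
  obtain ⟨c, hc, h⟩ := dual_bound hCc hv
  refine (Metric.isBounded_closedBall (x := (0 : EuclideanSpace ℝ (Fin (n+1)))) (r := 1 / c)).subset ?_ |>.measure_lt_top
  rintro x ⟨hx, hx1⟩
  have := h x (subset_closure hx)
  simp only [mem_closedBall_zero_iff]
  rw [le_div_iff₀ hc]
  simp at hx1
  linarith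

theorem coneVolume_eq (hCo : IsOpen C) (hsharp : IsSharp C) {v} (hv : v ∈ DualCone C) :
    coneVolume C v = (volume (C ∩ {x | ⟪x, v⟫ ≤ 1})).toReal := by
  rw [coneVolume, sublevel_eq hCo hsharp hv]

theorem coneVolume_tendsto (hCo : IsOpen C) (hCc : IsCone C) (hconv : Convex ℝ C)
    (hsharp : IsSharp C) (hne : C.Nonempty) (ψ) (hψ : ψ ∈ frontier (DualCone C)) :
    Tendsto (coneVolume C) (nhdsWithin ψ (DualCone C)) atTop := by
  have hψ' : ψ ∉ DualCone C := by
    have := hψ.2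
    rwa [(dual_open hCc).interior_eq] at this
  obtain ⟨x, hx, hx0, hxψ⟩ : ∃ x ∈ closure C, x ≠ 0 ∧ ⟪x, ψ⟫ ≤ 0 := by
    simpa [DualCone] using hψ'
  obtain ⟨p0, hp0⟩ := hne
  obtain ⟨p, hp, hpψ⟩ : ∃ p ∈ C, ⟪p, ψ⟫ < 1 := by
    refine ⟨(1 / (|⟪p0, ψ⟫| + 1)) • p0, cone_smul hCc (by positivity) hp0, ?_⟩
    rw [real_inner_smul_left, one_div, inv_mul_eq_div, div_lt_one (by positivity)]
    linarith [le_abs_self ⟪p0, ψ⟫]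
  have hop : IsOpen (C ∩ {y | ⟪y, ψ⟫ < 1}) :=
    hCo.inter (isOpen_lt (by fun_prop) continuous_const)
  obtain ⟨r, hr, hball⟩ := Metric.isOpen_iff.1 hop p ⟨hp, hpψ⟩
  set ρ := r / 2 with hρ
  have hρ0 : 0 < ρ := by positivity
  have hcb : Metric.closedBall p ρ ⊆ C ∩ {y | ⟪y, ψ⟫ < 1} :=
    (Metric.closedBall_subset_ball (by linarith)).trans hball
  have hn : 0 < ‖x‖ := norm_pos_iff.2 hx0
  set z := (3 * ρ / ‖x‖) • x with hz
  have hzC : z ∈ closure C := cone_smul_closure hCc (by positivity) hx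
  have hzn : ‖z‖ = 3 * ρ := by
    rw [hz, norm_smul, Real.norm_of_nonneg (by positivity)]; field_simp
  have hzψ : ⟪z, ψ⟫ ≤ 0 := by
    rw [hz, real_inner_smul_left]
    exact mul_nonpos_of_nonneg_of_nonpos (by positivity) hxψ
  set B : ℕ → Set (EuclideanSpace ℝ (Fin (n+1))) := fun k =>
    Metric.closedBall (p + (k:ℝ) • z) ρ with hB
  have hBC : ∀ k, B k ⊆ C ∩ {y | ⟪y, ψ⟫ < 1} := by
    intro k y hy
    have hy' : y - (k:ℝ) • z ∈ Metric.closedBall p ρ := by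
      simp only [hB, Metric.mem_closedBall, dist_eq_norm] at hy ⊢
      rwa [show y - (k:ℝ) • z - p = y - (p + (k:ℝ) • z) by abel]
    obtain ⟨h1, h2⟩ := hcb hy'
    have hyy : y = (y - (k:ℝ) • z) + (k:ℝ) • z := by abel
    constructor
    · rcases k.eq_zero_or_pos with rfl | hk
      · simpa using h1
      · rw [hyy]
        exact cone_add hCo hCc hconv h1 (cone_smul_closure hCc (by exact_mod_cast hk) hzC)
    · simp only [Set.mem_ofPred_eq] at h2 ⊢
      rw [hyy, inner_add_left, real_inner_smul_left]
      have := mul_nonpos_of_nonneg_of_nonpos (Nat.cast_nonneg (α := ℝ) k) hzψ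
      linarith
  have hdisj : Pairwise (Function.onFun Disjoint B) := by
    intro i j hij
    apply Metric.closedBall_disjoint_closedBall
    rw [dist_eq_norm, show p + (i:ℝ) • z - (p + (j:ℝ) • z) = ((i:ℝ) - j) • z by
      rw [sub_smul]; abel, norm_smul, hzn]
    have : (1:ℝ) ≤ ‖(i:ℝ) - j‖ := by
      have h : (i:ℤ) - j ≠ 0 := by omega
      have := Int.one_le_abs h
      rw [Real.norm_eq_abs]
      exact_mod_cast this
    nlinarith
  set β := (volume (Metric.closedBall p ρ)).toReal with hβ
  have hβ0 : 0 < β := ENNReal.toReal_pos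
    (Metric.measure_closedBall_pos volume p hρ0).ne' measure_closedBall_lt_top.ne
  have hBv : ∀ k, volume (B k) = volume (Metric.closedBall p ρ) := by
    intro k
    simp only [hB]
    rw [Measure.addHaar_closedBall_center, Measure.addHaar_closedBall_center volume p]
  rw [tendsto_atTop]
  intro M
  obtain ⟨N, hN⟩ := exists_nat_ge (M / β)
  have hMN : M ≤ N * β := by rwa [div_le_iff₀ hβ0] at hN
  set U := ⋃ k ∈ Finset.range N, B k with hU
  have hUc : IsCompact U := by
    rw [hU]
    exact (Finset.range N).isCompact_biUnion fun k _ => isCompact_closedBall _ _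
  have hUs : U ⊆ C ∩ {y | ⟪y, ψ⟫ < 1} := by
    rw [hU]; exact Set.iUnion₂_subset fun k _ => hBC k
  have hUv : volume U = N * volume (Metric.closedBall p ρ) := by
    rw [hU, measure_biUnion_finset (fun i _ j _ hij => hdisj hij)
      (fun k _ => measurableSet_closedBall)]
    simp [hBv]
  have hev : ∀ᶠ φ in nhds ψ, ∀ y ∈ U, ⟪y, φ⟫ < 1 := by
    obtain ⟨R, hR⟩ := hUc.isBounded.exists_norm_le
    rcases U.eq_empty_or_nonempty with h | h
    · simp [h]
    obtain ⟨k, hk, hmax⟩ := hUc.exists_isMaxOn h (f := fun y => ⟪y, ψ⟫) (by fun_prop)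
    have hk1 : ⟪k, ψ⟫ < 1 := (hUs hk).2
    have hR0 : 0 ≤ R := (norm_nonneg k).trans (hR k hk)
    filter_upwards [Metric.ball_mem_nhds ψ (ε := (1 - ⟪k, ψ⟫) / (R + 1))
      (div_pos (by linarith) (by linarith))] with φ hφ y hy
    rw [Metric.mem_ball, dist_eq_norm, lt_div_iff₀ (by linarith)] at hφ
    have h1 : ⟪y, ψ⟫ ≤ ⟪k, ψ⟫ := hmax hy
    have h2 : ⟪y, φ⟫ = ⟪y, ψ⟫ + ⟪y, φ - ψ⟫ := by rw [← inner_add_right]; simp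
    have h3 := real_inner_le_norm y (φ - ψ)
    have h4 := mul_le_mul_of_nonneg_right (hR y hy) (norm_nonneg (φ - ψ))
    have := norm_nonneg (φ - ψ)
    rw [h2]
    nlinarith
  filter_upwards [nhdsWithin_le_nhds hev, self_mem_nhdsWithin] with φ hφ hφC
  rw [coneVolume_eq hCo hsharp hφC]
  have hle : volume U ≤ volume (C ∩ {x | ⟪x, φ⟫ ≤ 1}) :=
    measure_mono fun y hy => ⟨(hUs hy).1, (hφ y hy).le⟩
  have := ENNReal.toReal_mono (sublevel_finite hCc hφC).ne hle
  rw [hUv, ENNReal.toReal_mul] at this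
  simp at this
  exact hMN.trans this


theorem sublevel_scale (hCc : IsCone C) (v : EuclideanSpace ℝ (Fin (n+1))) {t : ℝ} (ht : 0 < t) :
    volume (C ∩ {x | ⟪x, v⟫ ≤ t}) = ENNReal.ofReal (t ^ (n+1)) * volume (C ∩ {x | ⟪x, v⟫ ≤ 1}) := by
  have h : C ∩ {x | ⟪x, v⟫ ≤ t} = t • (C ∩ {x | ⟪x, v⟫ ≤ 1}) := by
    ext x
    rw [Set.mem_smul_set_iff_inv_smul_mem₀ ht.ne']
    simp only [Set.mem_inter_iff, Set.mem_ofPred_eq, real_inner_smul_left]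
    rw [inv_mul_eq_div, div_le_one ht]
    refine and_congr_left fun _ => ⟨fun hx => cone_smul hCc (by positivity) hx, fun hx => ?_⟩
    have := cone_smul hCc ht hx
    rwa [smul_inv_smul₀ ht.ne'] at this
  rw [h, Measure.addHaar_smul]
  simp [abs_of_pos ht]

/-- The normalising constant of the Laplace transform formula. -/
noncomputable def lapConst (n : ℕ) : ENNReal :=
  ∫⁻ t in Set.Ioi (0:ℝ), ENNReal.ofReal (Real.exp (-t)) * ENNReal.ofReal (t ^ (n+1))

theorem lapConst_lt_top (n : ℕ) : lapConst n < ⊤ := by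
  have h := (Real.GammaIntegral_convergent (s := n + 2) (by positivity)).lintegral_lt_top
  refine lt_of_le_of_lt (le_of_eq ?_) h
  refine setLIntegral_congr_fun measurableSet_Ioi fun t ht => ?_
  rw [← ENNReal.ofReal_mul (Real.exp_pos _).le]
  have : ((n:ℝ) + 2 - 1) = ((n + 1 : ℕ) : ℝ) := by push_cast; ring
  simp only [this, Real.rpow_natCast]

theorem lapConst_pos (n : ℕ) : 0 < lapConst n := by
  refine (setLIntegral_pos_iff (by fun_prop)).2 ?_
  refine lt_of_lt_of_le (b := volume (Set.Ioi (0:ℝ))) (by simp) (measure_mono ?_)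
  intro t ht
  refine ⟨?_, ht⟩
  have ht' : 0 < t := ht
  simp [Real.exp_pos, ht']

theorem laplace (hCo : IsOpen C) (hCc : IsCone C) {v} (hv : v ∈ DualCone C) :
    ∫⁻ x in C, ENNReal.ofReal (Real.exp (-⟪x, v⟫)) =
      lapConst n * volume (C ∩ {x | ⟪x, v⟫ ≤ 1}) := by
  have h1 : ∀ x : EuclideanSpace ℝ (Fin (n+1)), ENNReal.ofReal (Real.exp (-⟪x, v⟫)) =
      ∫⁻ t, (if ⟪x, v⟫ ≤ t then ENNReal.ofReal (Real.exp (-t)) else 0) := by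
    intro x
    have : (fun t : ℝ => if ⟪x, v⟫ ≤ t then ENNReal.ofReal (Real.exp (-t)) else 0) =
        (Set.Ici ⟪x, v⟫).indicator (fun t => ENNReal.ofReal (Real.exp (-t))) := by
      ext t; simp [Set.indicator_apply]
    rw [this, lintegral_indicator measurableSet_Ici, setLIntegral_congr Ioi_ae_eq_Ici.symm,
      ← ofReal_integral_eq_lintegral_ofReal (integrableOn_exp_neg_Ioi _)
        (Eventually.of_forall fun t => (Real.exp_pos _).le), integral_exp_neg_Ioi]
  simp_rw [h1]
  rw [lintegral_lintegral_swap]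
  swap
  · refine (Measurable.ite ?_ ?_ measurable_const).aemeasurable
    · exact measurableSet_le (by fun_prop) (by fun_prop)
    · fun_prop
  have h2 : ∀ t : ℝ, ∫⁻ x in C, (if ⟪x, v⟫ ≤ t then ENNReal.ofReal (Real.exp (-t)) else 0) =
      ENNReal.ofReal (Real.exp (-t)) * volume (C ∩ {x | ⟪x, v⟫ ≤ t}) := by
    intro t
    have hm : MeasurableSet {x : EuclideanSpace ℝ (Fin (n+1)) | ⟪x, v⟫ ≤ t} :=
      measurableSet_le (by fun_prop) measurable_const
    have : (fun x : EuclideanSpace ℝ (Fin (n+1)) => if ⟪x, v⟫ ≤ t then ENNReal.ofReal (Real.exp (-t)) else 0) =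
        ({x | ⟪x, v⟫ ≤ t}).indicator (fun _ => ENNReal.ofReal (Real.exp (-t))) := by
      ext x; simp [Set.indicator_apply]
    rw [this, lintegral_indicator hm, setLIntegral_const, Measure.restrict_apply hm,
      Set.inter_comm]
  simp_rw [h2]
  rw [lapConst, ← lintegral_mul_const _ (by fun_prop), ← lintegral_indicator measurableSet_Ioi]
  refine lintegral_congr fun t => ?_
  rw [Set.indicator_apply]
  split_ifs with ht
  · rw [sublevel_scale hCc v ht, mul_assoc]
  · have hsub : C ∩ {x | ⟪x, v⟫ ≤ t} ⊆ {0} := by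
      rintro x ⟨hx, hxt⟩
      by_contra hx0
      have := hv x (subset_closure hx) hx0
      simp at hxt ht
      linarith
    rw [measure_mono_null hsub (by simp), mul_zero]

theorem laplace_integrable (hCo : IsOpen C) (hCc : IsCone C) {v} (hv : v ∈ DualCone C) :
    IntegrableOn (fun x => Real.exp (-⟪x, v⟫)) C := by
  refine ⟨Continuous.aestronglyMeasurable (by fun_prop), ?_⟩
  rw [hasFiniteIntegral_iff_ofReal (Eventually.of_forall fun t => (Real.exp_pos _).le),
    laplace hCo hCc hv]
  exact ENNReal.mul_lt_top (lapConst_lt_top n) (sublevel_finite hCc hv)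

theorem laplace_real (hCo : IsOpen C) (hCc : IsCone C) (hsharp : IsSharp C) {v}
    (hv : v ∈ DualCone C) :
    coneVolume C v = (lapConst n).toReal⁻¹ * ∫ x in C, Real.exp (-⟪x, v⟫) := by
  have hK : (lapConst n).toReal ≠ 0 :=
    (ENNReal.toReal_pos (lapConst_pos n).ne' (lapConst_lt_top n).ne).ne'
  rw [integral_eq_lintegral_of_nonneg_ae (Eventually.of_forall fun t => (Real.exp_pos _).le)
    (Continuous.aestronglyMeasurable (by fun_prop)), laplace hCo hCc hv, ENNReal.toReal_mul,
    coneVolume_eq hCo hsharp hv, inv_mul_cancel_left₀ hK]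

theorem laplace_strict (hCo : IsOpen C) (hCc : IsCone C) (hne : C.Nonempty) :
    StrictConvexOn ℝ (DualCone C) (fun v => ∫ x in C, Real.exp (-⟪x, v⟫)) := by
  refine ⟨dual_convex, fun v hv w hw hvw a b ha hb hab => ?_⟩
  have hm : a • v + b • w ∈ DualCone C := dual_convex hv hw ha.le hb.le hab
  have iv := (laplace_integrable hCo hCc hv).const_mul a
  have iw := (laplace_integrable hCo hCc hw).const_mul b
  have im := laplace_integrable hCo hCc hm
  have hin : ∀ x : EuclideanSpace ℝ (Fin (n+1)),
      -⟪x, a • v + b • w⟫ = a • (-⟪x, v⟫) + b • (-⟪x, w⟫) := by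
    intro x
    rw [inner_add_right, inner_smul_right, inner_smul_right, smul_eq_mul, smul_eq_mul]; ring
  have hle : ∀ x : EuclideanSpace ℝ (Fin (n+1)), Real.exp (-⟪x, a • v + b • w⟫) ≤
      a * Real.exp (-⟪x, v⟫) + b * Real.exp (-⟪x, w⟫) := by
    intro x
    rw [hin]
    exact strictConvexOn_exp.convexOn.2 (Set.mem_univ _) (Set.mem_univ _) ha.le hb.le hab
  have hlt : ∀ x : EuclideanSpace ℝ (Fin (n+1)), ⟪x, v⟫ ≠ ⟪x, w⟫ →
      Real.exp (-⟪x, a • v + b • w⟫) < a * Real.exp (-⟪x, v⟫) + b * Real.exp (-⟪x, w⟫) := by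
    intro x hx
    rw [hin]
    exact strictConvexOn_exp.2 (Set.mem_univ _) (Set.mem_univ _)
      (fun h => hx (neg_injective h)) ha hb hab
  have hpos : 0 < ∫ x in C, ((a * Real.exp (-⟪x, v⟫) + b * Real.exp (-⟪x, w⟫)) -
      Real.exp (-⟪x, a • v + b • w⟫)) := by
    rw [setIntegral_pos_iff_support_of_nonneg_ae
      (Eventually.of_forall fun x => sub_nonneg.2 (hle x)) ((iv.add iw).sub im)]
    have hop : IsOpen (C ∩ {x | ⟪x, v⟫ ≠ ⟪x, w⟫}) :=
      hCo.inter (isOpen_ne_fun (by fun_prop) (by fun_prop))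
    have hnon : (C ∩ {x | ⟪x, v⟫ ≠ ⟪x, w⟫}).Nonempty := by
      obtain ⟨p, hp⟩ := hne
      by_cases hpe : ⟪p, v⟫ = ⟪p, w⟫
      · have hcont : Tendsto (fun s : ℝ => p + s • (v - w)) (nhdsWithin 0 (Set.Ioi 0)) (nhds p) := by
          have : Continuous (fun s : ℝ => p + s • (v - w)) := by fun_prop
          have h := this.tendsto 0
          simp only [zero_smul, add_zero] at h
          exact h.mono_left nhdsWithin_le_nhds
        obtain ⟨s, hs, hs0⟩ := ((hcont.eventually (hCo.mem_nhds hp)).and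
          self_mem_nhdsWithin).exists
        refine ⟨_, hs, ?_⟩
        have hs0' : (0:ℝ) < s := hs0
        rw [Set.mem_ofPred_eq, ← sub_ne_zero, ← inner_sub_right, inner_add_left,
          real_inner_smul_left, inner_sub_right, hpe, sub_self, zero_add]
        have : ⟪v - w, v - w⟫ ≠ 0 := by
          rw [Ne, inner_self_eq_zero]; exact sub_ne_zero.2 hvw
        exact mul_ne_zero hs0'.ne' this
      · exact ⟨p, hp, hpe⟩
    refine lt_of_lt_of_le (hop.measure_pos volume hnon) (measure_mono ?_)
    rintro x ⟨hx, hx1⟩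
    exact ⟨(sub_pos.2 (hlt x hx1)).ne', hx⟩
  have ivw : Integrable (fun x => a * Real.exp (-⟪x, v⟫) + b * Real.exp (-⟪x, w⟫))
      (volume.restrict C) := iv.add iw
  rw [integral_sub ivw im, integral_add iv iw, integral_const_mul, integral_const_mul] at hpos
  simp only [smul_eq_mul]
  linarith

theorem coneVolume_strict (hCo : IsOpen C) (hCc : IsCone C) (hsharp : IsSharp C)
    (hne : C.Nonempty) : StrictConvexOn ℝ (DualCone C) (coneVolume C) := by
  have hK : 0 < (lapConst n).toReal⁻¹ :=
    inv_pos.2 (ENNReal.toReal_pos (lapConst_pos n).ne' (lapConst_lt_top n).ne)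
  have h := laplace_strict hCo hCc hne
  refine ⟨h.1, fun v hv w hw hvw a b ha hb hab => ?_⟩
  have h2 := mul_lt_mul_of_pos_left (h.2 hv hw hvw ha hb hab) hK
  rw [laplace_real hCo hCc hsharp hv, laplace_real hCo hCc hsharp hw,
    laplace_real hCo hCc hsharp (h.1 hv hw ha.le hb.le hab)]
  simp only [smul_eq_mul] at h2 ⊢
  linarith

theorem slice_bound (hCo : IsOpen C) {q} (hq : q ∈ C) :
    ∃ R, ∀ w ∈ DualCone C, ⟪q, w⟫ = 1 → ‖w‖ ≤ R := by
  obtain ⟨r, hr, hb⟩ := Metric.isOpen_iff.1 hCo q hq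
  refine ⟨2 / r, fun w hw hqw => ?_⟩
  by_cases hw0 : w = 0
  · simp [hw0] at hqw
  have hn : 0 < ‖w‖ := norm_pos_iff.2 hw0
  have hmem : q - (r / 2 / ‖w‖) • w ∈ C := by
    apply hb
    rw [Metric.mem_ball, dist_eq_norm, sub_sub_cancel_left, norm_neg, norm_smul,
      Real.norm_of_nonneg (by positivity), div_mul_cancel₀ _ hn.ne']
    linarith
  have h0 : 0 ≤ ⟪q - (r / 2 / ‖w‖) • w, w⟫ := by
    by_cases hz : q - (r / 2 / ‖w‖) • w = 0
    · rw [hz]; simp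
    · exact (hw _ (subset_closure hmem) hz).le
  rw [inner_sub_left, real_inner_smul_left, hqw, real_inner_self_eq_norm_sq] at h0
  have : r / 2 / ‖w‖ * ‖w‖ ^ 2 = r / 2 * ‖w‖ := by field_simp
  rw [this] at h0
  rw [le_div_iff₀ hr]
  linarith

theorem exists_min (hCo : IsOpen C) (hCc : IsCone C) (hconv : Convex ℝ C) (hsharp : IsSharp C)
    (hne : C.Nonempty) {q} (hq : q ∈ C) :
    ∃ v ∈ {w ∈ DualCone C | ⟪q, w⟫ = 1},
      IsMinOn (coneVolume C) {w ∈ DualCone C | ⟪q, w⟫ = 1} v := by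
  have hcont : ContinuousOn (coneVolume C) (DualCone C) :=
    (coneVolume_strict hCo hCc hsharp hne).convexOn.continuousOn (dual_open hCc)
  have hq0 : q ≠ 0 := by rintro rfl; exact cone_zero_notMem hCo hsharp hq
  obtain ⟨v0, hv0, hv0q⟩ : ∃ v ∈ DualCone C, ⟪q, v⟫ = 1 := by
    obtain ⟨u, hu⟩ := dual_nonempty hCc hconv hsharp hne
    have hqu := hu q (subset_closure hq) hq0
    refine ⟨(⟪q, u⟫)⁻¹ • u, fun x hx hx0 => ?_, ?_⟩
    · rw [inner_smul_right]
      exact mul_pos (inv_pos.2 hqu) (hu x hx hx0)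
    · rw [inner_smul_right, inv_mul_cancel₀ hqu.ne']
  set T := {w | (w ∈ DualCone C ∧ ⟪q, w⟫ = 1) ∧ coneVolume C w ≤ coneVolume C v0} with hT
  have hTclosed : IsClosed T := by
    refine isClosed_of_closure_subset fun w hw => ?_
    have hNe : (nhdsWithin w T).NeBot := mem_closure_iff_nhdsWithin_neBot.1 hw
    have hTD : T ⊆ DualCone C := fun x hx => hx.1.1
    have hle : ∀ᶠ x in nhdsWithin w T, coneVolume C x ≤ coneVolume C v0 :=
      eventually_of_mem self_mem_nhdsWithin fun x hx => hx.2
    have hwq : ⟪q, w⟫ = 1 := by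
      have hcl : IsClosed {x | ⟪q, x⟫ = 1} := isClosed_eq (by fun_prop) continuous_const
      exact hcl.closure_subset_iff.2 (fun x hx => hx.1.2) hw
    by_cases hwD : w ∈ DualCone C
    · exact ⟨⟨hwD, hwq⟩, le_of_tendsto ((hcont w hwD).mono hTD) hle⟩
    · exfalso
      have hfr : w ∈ frontier (DualCone C) :=
        ⟨closure_mono hTD hw, fun h => hwD (interior_subset h)⟩
      have ht := (coneVolume_tendsto hCo hCc hconv hsharp hne w hfr).mono_left
        (nhdsWithin_mono w hTD)
      obtain ⟨x, hx1, hx2⟩ := ((ht.eventually_gt_atTop (coneVolume C v0)).and hle).exists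
      linarith
  obtain ⟨R, hR⟩ := slice_bound hCo hq
  have hTc : IsCompact T := by
    refine (isCompact_closedBall (0 : EuclideanSpace ℝ (Fin (n+1))) R).of_isClosed_subset
      hTclosed fun w hw => ?_
    simpa using hR w hw.1.1 hw.1.2
  obtain ⟨v, hv, hmin⟩ := hTc.exists_isMinOn ⟨v0, ⟨hv0, hv0q⟩, le_rfl⟩
    (hcont.mono fun x hx => hx.1.1)
  refine ⟨v, hv.1, fun w hw => ?_⟩
  by_cases h : coneVolume C w ≤ coneVolume C v0
  · exact hmin ⟨hw, h⟩
  · exact hv.2.trans (not_le.1 h).le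

end helpers

/-- **Properness of the volume function and unique minimum on slices.** For an open
properly convex cone `C ⊂ ℝ^{n+1}`: (a) `V(φ) → ∞` as `φ` approaches any point of the
frontier of the dual cone from within `C*`; (b) for any `q ∈ C`, the restriction of `V`
to the affine slice `C*_q = {φ ∈ C* : φ(q) = 1}` attains a unique minimum. -/
theorem coneVolume_proper_and_unique_min (n : ℕ) (C : Set (EuclideanSpace ℝ (Fin (n+1))))
    (hCo : IsOpen C) (hCc : IsCone C) (hconv : Convex ℝ C) (hsharp : IsSharp C)
    (hne : C.Nonempty) :
    (∀ ψ ∈ frontier (DualCone C),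
      Tendsto (coneVolume C) (nhdsWithin ψ (DualCone C)) atTop) ∧
    (∀ q ∈ C, ∃! v, v ∈ {w ∈ DualCone C | ⟪q, w⟫ = 1} ∧
      IsMinOn (coneVolume C) {w ∈ DualCone C | ⟪q, w⟫ = 1} v) := by

  refine ⟨fun ψ hψ => coneVolume_tendsto hCo hCc hconv hsharp hne ψ hψ, fun q hq => ?_⟩
  obtain ⟨v, hv, hmin⟩ := exists_min hCo hCc hconv hsharp hne hq
  refine ⟨v, ⟨hv, hmin⟩, ?_⟩
  rintro w ⟨hw, hwmin⟩
  have hslice : Convex ℝ {w ∈ DualCone C | ⟪q, w⟫ = 1} := by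
    rintro x ⟨hx, hx1⟩ y ⟨hy, hy1⟩ a b ha hb hab
    refine ⟨dual_convex hx hy ha hb hab, ?_⟩
    rw [inner_add_right, inner_smul_right, inner_smul_right, hx1, hy1]
    simpa using hab
  exact ((coneVolume_strict hCo hCc hsharp hne).subset (fun x hx => hx.1) hslice).eq_of_isMinOn
    hwmin hmin hw hv
end

section
/- Let Ω ⊂ RP^n be an open properly convex domain and p ∈ Ω. Then there exists an affine patch R^n ⊂ RP^n containing Ω (i.e., a projective hyperplane disjoint from cl Ω) such that p is the centroid of Ω regarded as a bounded convex body in that affine patch. -/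
open MeasureTheory Pointwise
open scoped RealInnerProductSpace

namespace CentroidAux

lemma cone_smul {n : ℕ} {C : Set (EuclideanSpace ℝ (Fin (n+1)))} (hCc : IsCone C)
    {t : ℝ} (ht : 0 < t) {x : EuclideanSpace ℝ (Fin (n+1))} (hx : x ∈ C) : t • x ∈ C := by
  have := hCc t ht
  rw [← this]
  exact Set.smul_mem_smul_set hx

lemma closure_smul {n : ℕ} {C : Set (EuclideanSpace ℝ (Fin (n+1)))} (hCc : IsCone C)
    {t : ℝ} (ht : 0 < t) {x : EuclideanSpace ℝ (Fin (n+1))} (hx : x ∈ closure C) :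
    t • x ∈ closure C := by
  have hm : Set.MapsTo (fun y : EuclideanSpace ℝ (Fin (n+1)) => t • y) C C :=
    fun y hy => cone_smul hCc ht hy
  exact hm.closure (continuous_const_smul t) hx

lemma zero_mem_closure {n : ℕ} {C : Set (EuclideanSpace ℝ (Fin (n+1)))} (hCc : IsCone C)
    {x : EuclideanSpace ℝ (Fin (n+1))} (hx : x ∈ C) :
    (0 : EuclideanSpace ℝ (Fin (n+1))) ∈ closure C := by
  have h1 : Filter.Tendsto (fun t : ℝ => t • x) (nhdsWithin 0 (Set.Ioi 0)) (nhds ((0:ℝ) • x)) := by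
    apply Filter.Tendsto.mono_left _ nhdsWithin_le_nhds
    exact (continuous_id.smul continuous_const).tendsto 0
  rw [zero_smul] at h1
  refine mem_closure_of_tendsto h1 ?_
  filter_upwards [self_mem_nhdsWithin] with t ht
  exact cone_smul hCc ht hx

lemma add_closure_mem {n : ℕ} {C : Set (EuclideanSpace ℝ (Fin (n+1)))} (hCo : IsOpen C)
    (hCc : IsCone C) (hconv : Convex ℝ C)
    {x y : EuclideanSpace ℝ (Fin (n+1))} (hx : x ∈ C) (hy : y ∈ closure C) : x + y ∈ C := by
  have h := hconv.combo_interior_closure_mem_interior (a := 1/2) (b := 1/2)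
    (by rwa [hCo.interior_eq]) hy (by norm_num) (by norm_num) (by norm_num)
  rw [hCo.interior_eq] at h
  have h2 := cone_smul hCc (t := 2) (by norm_num) h
  rw [smul_add, smul_smul, smul_smul] at h2
  norm_num at h2
  exact h2

lemma exists_pointwise {n : ℕ} {C : Set (EuclideanSpace ℝ (Fin (n+1)))}
    (hCc : IsCone C) (hconv : Convex ℝ C) (hsharp : IsSharp C) (hne : C.Nonempty)
    {x : EuclideanSpace ℝ (Fin (n+1))} (hx : x ∈ closure C) (hx0 : x ≠ 0) :
    ∃ v : EuclideanSpace ℝ (Fin (n+1)), (∀ y ∈ closure C, 0 ≤ ⟪y, v⟫) ∧ 0 < ⟪x, v⟫ := by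
  obtain ⟨f, u, h1, h2⟩ := geometric_hahn_banach_point_closed (x := -x) hconv.closure
    isClosed_closure (hsharp x hx0 hx)
  obtain ⟨z, hz⟩ := hne
  have h0 := h2 0 (zero_mem_closure hCc hz)
  rw [map_zero] at h0
  have hf : ∀ y, ⟪y, (InnerProductSpace.toDual ℝ _).symm f⟫ = f y := by
    intro y
    rw [real_inner_comm, InnerProductSpace.toDual_symm_apply]
  refine ⟨(InnerProductSpace.toDual ℝ _).symm f, ?_, ?_⟩
  · intro y hy
    rw [hf]
    by_contra! hneg
    have h3 := h2 ((u / f y) • y) (closure_smul hCc (div_pos_of_neg_of_neg h0 hneg) hy)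
    rw [map_smul, smul_eq_mul, div_mul_cancel₀ _ hneg.ne] at h3
    exact lt_irrefl _ h3
  · rw [hf]
    rw [map_neg] at h1
    linarith

lemma compact_S {n : ℕ} (C : Set (EuclideanSpace ℝ (Fin (n+1)))) :
    IsCompact (closure C ∩ Metric.sphere 0 1) :=
  (isCompact_sphere _ _).inter_left isClosed_closure

lemma pos_of_pos_S {n : ℕ} {C : Set (EuclideanSpace ℝ (Fin (n+1)))}
    (hCc : IsCone C) {v : EuclideanSpace ℝ (Fin (n+1))} {c : ℝ}
    (h : ∀ x ∈ closure C ∩ Metric.sphere 0 1, c ≤ ⟪x, v⟫) :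
    ∀ x ∈ closure C, c * ‖x‖ ≤ ⟪x, v⟫ := by
  intro x hx
  by_cases hx0 : x = 0
  · simp [hx0]
  have hn : 0 < ‖x‖ := norm_pos_iff.2 hx0
  have := h (‖x‖⁻¹ • x) ⟨closure_smul hCc (inv_pos.2 hn) hx, by
    simp [norm_smul, hn.ne']⟩
  rw [real_inner_smul_left] at this
  rw [inv_mul_eq_div, le_div_iff₀ hn] at this
  exact this

lemma exists_lower {n : ℕ} {C : Set (EuclideanSpace ℝ (Fin (n+1)))}
    (hCc : IsCone C) {v : EuclideanSpace ℝ (Fin (n+1))}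
    (h : ∀ x ∈ closure C, x ≠ 0 → 0 < ⟪x, v⟫) :
    ∃ c : ℝ, 0 < c ∧ ∀ x ∈ closure C, c * ‖x‖ ≤ ⟪x, v⟫ := by
  have h' : ∀ x ∈ closure C ∩ Metric.sphere 0 1, 0 < ⟪x, v⟫ := by
    rintro x ⟨hx, hx1⟩
    refine h x hx ?_
    rintro rfl
    simp at hx1
  obtain ⟨c, hc, hc'⟩ := (compact_S C).exists_forall_le' (f := fun x => ⟪x, v⟫)
    (by fun_prop) h'
  exact ⟨c, hc, pos_of_pos_S hCc hc'⟩

lemma exists_dual {n : ℕ} {C : Set (EuclideanSpace ℝ (Fin (n+1)))}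
    (hCc : IsCone C) (hconv : Convex ℝ C) (hsharp : IsSharp C) (hne : C.Nonempty) :
    ∃ v : EuclideanSpace ℝ (Fin (n+1)), ∀ y ∈ closure C, y ≠ 0 → 0 < ⟪y, v⟫ := by
  classical
  obtain ⟨F, hF⟩ := (compact_S C).elim_finite_subcover (fun v : {v : EuclideanSpace ℝ (Fin (n+1)) // ∀ y ∈ closure C, 0 ≤ ⟪y, v⟫} => {x | 0 < ⟪x, (v.1 : EuclideanSpace ℝ (Fin (n+1)))⟫})
    (fun v => isOpen_lt continuous_const (by fun_prop)) (by
      rintro x ⟨hx, hx1⟩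
      obtain ⟨v, hv, hv'⟩ := exists_pointwise hCc hconv hsharp hne hx (by
        rintro rfl
        simp at hx1)
      exact Set.mem_iUnion.2 ⟨⟨v, hv⟩, hv'⟩)
  have hS : ∀ x ∈ closure C ∩ Metric.sphere 0 1, 0 < ⟪x, ∑ v ∈ F, v.1⟫ := by
    intro x hx
    obtain ⟨v, hv, hv'⟩ := Set.mem_iUnion₂.1 (hF hx)
    rw [inner_sum]
    exact Finset.sum_pos' (fun w _ => w.2 x hx.1) ⟨v, hv, hv'⟩
  obtain ⟨c, hc, hc'⟩ := (compact_S C).exists_forall_le' (f := fun x => ⟪x, ∑ v ∈ F, v.1⟫)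
    (by fun_prop) hS
  refine ⟨∑ v ∈ F, v.1, fun y hy hy0 => ?_⟩
  have := pos_of_pos_S hCc hc' y hy
  have h2 : 0 < ‖y‖ := norm_pos_iff.2 hy0
  exact lt_of_lt_of_le (mul_pos hc h2) this

/-- the functional to be minimised -/
noncomputable def H {n : ℕ} (C : Set (EuclideanSpace ℝ (Fin (n+1))))
    (v : EuclideanSpace ℝ (Fin (n+1))) : ENNReal :=
  ∫⁻ x in C, ENNReal.ofReal (1 - ⟪x, v⟫)

lemma H_lsc {n : ℕ} (C : Set (EuclideanSpace ℝ (Fin (n+1)))) : LowerSemicontinuous (H C) := by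
  rw [lowerSemicontinuous_iff_le_liminf]
  intro v
  refine le_trans (le_of_eq ?_) (lintegral_liminf_le (fun w => by fun_prop))
  refine lintegral_congr fun x => ?_
  have : Continuous fun w : EuclideanSpace ℝ (Fin (n+1)) => ENNReal.ofReal (1 - ⟪x, w⟫) :=
    ENNReal.continuous_ofReal.comp (by fun_prop)
  exact (this.tendsto v).liminf_eq.symm

/-- the closed slice of the dual cone -/
def D {n : ℕ} (C : Set (EuclideanSpace ℝ (Fin (n+1))))
    (x₀ : EuclideanSpace ℝ (Fin (n+1))) : Set (EuclideanSpace ℝ (Fin (n+1))) :=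
  {v | ⟪x₀, v⟫ = 1 ∧ ∀ y ∈ closure C, 0 ≤ ⟪y, v⟫}

lemma D_compact {n : ℕ} {C : Set (EuclideanSpace ℝ (Fin (n+1)))} (hCo : IsOpen C)
    {x₀ : EuclideanSpace ℝ (Fin (n+1))} (hx₀ : x₀ ∈ C) : IsCompact (D C x₀) := by
  apply Metric.isCompact_of_isClosed_isBounded
  · have : D C x₀ = {v | ⟪x₀, v⟫ = 1} ∩ ⋂ y ∈ closure C, {v | 0 ≤ ⟪y, v⟫} := by
      ext v
      simp [D]
    rw [this]
    refine (isClosed_eq (by fun_prop) continuous_const).inter ?_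
    exact isClosed_biInter fun y _ => isClosed_le continuous_const (by fun_prop)
  · obtain ⟨r, hr, hrC⟩ := Metric.isOpen_iff.1 hCo x₀ hx₀
    refine (Metric.isBounded_closedBall (x := 0) (r := 2 / r)).subset ?_
    rintro v ⟨hv1, hv2⟩
    rw [mem_closedBall_zero_iff]
    by_cases hv0 : v = 0
    · rw [hv0, norm_zero]; positivity
    have hn : 0 < ‖v‖ := norm_pos_iff.2 hv0
    have := hv2 (x₀ - (r / 2 * ‖v‖⁻¹) • v) (subset_closure (hrC (by
      rw [mem_ball_iff_norm, sub_sub_cancel_left, norm_neg, norm_smul, Real.norm_eq_abs,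
        abs_of_pos (by positivity), mul_assoc, inv_mul_cancel₀ hn.ne']
      linarith)))
    rw [inner_sub_left, hv1, real_inner_smul_left, real_inner_self_eq_norm_sq] at this
    have h3 : r / 2 * ‖v‖⁻¹ * ‖v‖ ^ 2 = r / 2 * ‖v‖ := by field_simp
    rw [h3] at this
    rw [le_div_iff₀ hr]
    linarith

lemma H_top {n : ℕ} {C : Set (EuclideanSpace ℝ (Fin (n+1)))} (hCo : IsOpen C)
    (hCc : IsCone C) (hconv : Convex ℝ C)
    {x₀ v x₁ : EuclideanSpace ℝ (Fin (n+1))} (hx₀ : x₀ ∈ C) (hv : ⟪x₀, v⟫ = 1)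
    (hx₁ : x₁ ∈ closure C) (h0 : x₁ ≠ 0) (h1 : ⟪x₁, v⟫ = 0) : H C v = ⊤ := by
  set A : Set (EuclideanSpace ℝ (Fin (n+1))) := C ∩ {x | ⟪x, v⟫ < 1/2} with hA
  have hAo : IsOpen A := hCo.inter (isOpen_lt (by fun_prop) continuous_const)
  have hz : (1/4 : ℝ) • x₀ ∈ A := by
    refine ⟨cone_smul hCc (by norm_num) hx₀, ?_⟩
    simp only [Set.mem_ofPred_eq, real_inner_smul_left, hv]
    norm_num
  obtain ⟨r, hr, hrA⟩ := Metric.isOpen_iff.1 hAo _ hz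
  set z := (1/4 : ℝ) • x₀
  have hn : 0 < ‖x₁‖ := norm_pos_iff.2 h0
  set s : ℝ := 2 * r / ‖x₁‖ with hs
  have hspos : 0 < s := by positivity
  have hsx : s * ‖x₁‖ = 2 * r := by rw [hs]; field_simp
  let B : ℕ → Set (EuclideanSpace ℝ (Fin (n+1))) := fun k => Metric.ball (z + (k * s : ℝ) • x₁) r
  have hBA : ∀ k, B k ⊆ A := by
    intro k y hy
    have hy' : y - (k * s : ℝ) • x₁ ∈ A := by
      apply hrA
      have : dist y (z + (k * s : ℝ) • x₁) < r := hy
      rw [dist_eq_norm] at this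
      rw [mem_ball_iff_norm]
      convert this using 2
      abel
    have hk : (k * s : ℝ) • x₁ ∈ closure C := by
      rcases Nat.eq_zero_or_pos k with hk | hk
      · simpa [hk] using zero_mem_closure hCc hx₀
      · exact closure_smul hCc (by positivity) hx₁
    have hy2 := add_closure_mem hCo hCc hconv hy'.1 hk
    rw [sub_add_cancel] at hy2
    refine ⟨hy2, ?_⟩
    have := hy'.2
    simpa [inner_sub_left, real_inner_smul_left, h1] using this
  have hdisj : Pairwise (Function.onFun Disjoint B) := by
    intro i j hij
    apply Metric.ball_disjoint_ball
    rw [dist_add_left, dist_eq_norm, ← sub_smul, norm_smul, ← sub_mul, norm_mul,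
      Real.norm_eq_abs s, abs_of_pos hspos, mul_assoc, hsx]
    have : (1:ℝ) ≤ ‖(i:ℝ) - j‖ := by
      have h : (1:ℤ) ≤ |(i:ℤ) - j| := Int.one_le_abs (by omega)
      rw [Real.norm_eq_abs]
      exact_mod_cast h
    nlinarith
  have hvol : volume A = ⊤ := by
    rw [eq_top_iff]
    calc (⊤ : ENNReal) = ∑' k, volume (B k) := by
          have : ∀ k, volume (B k) = volume (Metric.ball (0:EuclideanSpace ℝ (Fin (n+1))) r) :=
            fun k => Measure.addHaar_ball_center _ _ _
          simp_rw [this]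
          rw [ENNReal.tsum_const_eq_top_of_ne_zero]
          exact (Metric.measure_ball_pos volume _ hr).ne'
      _ = volume (⋃ k, B k) := (measure_iUnion hdisj fun k => Metric.isOpen_ball.measurableSet).symm
      _ ≤ volume A := measure_mono (Set.iUnion_subset hBA)
  rw [eq_top_iff]
  calc (⊤ : ENNReal) = ENNReal.ofReal (1/2) * volume A := by
        rw [hvol, ENNReal.mul_top]; simp
    _ = ∫⁻ x in A, ENNReal.ofReal (1/2) := by rw [setLIntegral_const]
    _ ≤ ∫⁻ x in A, ENNReal.ofReal (1 - ⟪x, v⟫) := by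
        refine setLIntegral_mono' hAo.measurableSet fun x hx => ?_
        apply ENNReal.ofReal_le_ofReal
        have := hx.2
        simp only [Set.mem_ofPred_eq] at this
        linarith
    _ ≤ H C v := lintegral_mono_set Set.inter_subset_left

lemma H_eq {n : ℕ} {C : Set (EuclideanSpace ℝ (Fin (n+1)))} (hCo : IsOpen C)
    {v : EuclideanSpace ℝ (Fin (n+1))} {c : ℝ} (hc : 0 < c)
    (h : ∀ x ∈ closure C, c * ‖x‖ ≤ ⟪x, v⟫) :
    H C v = ENNReal.ofReal (∫ x in C ∩ Metric.closedBall 0 (1 / c), max (1 - ⟪x, v⟫) 0) := by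
  have hm : MeasurableSet (C ∩ Metric.closedBall 0 (1 / c)) :=
    hCo.measurableSet.inter Metric.isClosed_closedBall.measurableSet
  rw [ofReal_integral_eq_lintegral_ofReal]
  · rw [H]
    have : ∀ x : EuclideanSpace ℝ (Fin (n+1)), ENNReal.ofReal (max (1 - ⟪x, v⟫) 0)
        = ENNReal.ofReal (1 - ⟪x, v⟫) := by
      intro x
      rw [ENNReal.ofReal_max]
      simp
    simp_rw [this]
    rw [← lintegral_indicator hCo.measurableSet, ← lintegral_indicator hm]
    refine lintegral_congr fun x => ?_
    by_cases hx : x ∈ C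
    swap
    · rw [Set.indicator_of_notMem hx, Set.indicator_of_notMem (fun hh => hx hh.1)]
    by_cases hx' : x ∈ C ∩ Metric.closedBall 0 (1 / c)
    · rw [Set.indicator_of_mem hx, Set.indicator_of_mem hx']
    rw [Set.indicator_of_mem hx, Set.indicator_of_notMem hx']
    rw [ENNReal.ofReal_eq_zero]
    have h1 : ¬ ‖x‖ ≤ 1 / c := fun hh => hx' ⟨hx, by simpa using hh⟩
    have h2 := h x (subset_closure hx)
    rw [le_div_iff₀ hc] at h1
    linarith
  · have : ContinuousOn (fun x : EuclideanSpace ℝ (Fin (n+1)) => max (1 - ⟪x, v⟫) 0)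
        (Metric.closedBall 0 (1 / c)) := by fun_prop
    exact (this.integrableOn_compact (isCompact_closedBall _ _)).mono_set Set.inter_subset_right
  · exact Filter.Eventually.of_forall fun x => le_max_right _ _

lemma null_hyperplane {n : ℕ} {x₀ v : EuclideanSpace ℝ (Fin (n+1))} (hv : ⟪x₀, v⟫ = 1) :
    ∀ᵐ x : EuclideanSpace ℝ (Fin (n+1)), ⟪x, v⟫ ≠ 1 := by
  have h := Measure.addHaar_affineSubspace (volume : Measure (EuclideanSpace ℝ (Fin (n+1))))
    (AffineSubspace.mk' x₀ (LinearMap.ker (innerₛₗ ℝ v))) (by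
      intro htop
      have h0 : (0 : EuclideanSpace ℝ (Fin (n+1))) ∈
          AffineSubspace.mk' x₀ (LinearMap.ker (innerₛₗ ℝ v)) := by
        rw [htop]; trivial
      rw [AffineSubspace.mem_mk'] at h0
      simp [real_inner_comm, hv] at h0)
  rw [ae_iff]
  refine measure_mono_null ?_ h
  intro x hx
  simp only [ne_eq, not_not, Set.mem_ofPred_eq] at hx
  simp only [SetLike.mem_coe, AffineSubspace.mem_mk', vsub_eq_sub, LinearMap.mem_ker]
  rw [innerₛₗ_apply_apply, real_inner_comm, inner_sub_left, hx, hv, sub_self]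

lemma deriv_g {n : ℕ} {K : Set (EuclideanSpace ℝ (Fin (n+1)))}
    {R : ℝ} (hKR : K ⊆ Metric.closedBall 0 R)
    {x₀ v : EuclideanSpace ℝ (Fin (n+1))} (hv : ⟪x₀, v⟫ = 1)
    (w : EuclideanSpace ℝ (Fin (n+1))) :
    HasDerivAt (fun ε : ℝ => ∫ x in K, max (1 - ⟪x, v + ε • w⟫) 0)
      (∫ x in K, Set.indicator {x | ⟪x, v⟫ ≤ 1} (fun x => - ⟪x, w⟫) x) 0 := by
  have hI : ∀ f : EuclideanSpace ℝ (Fin (n+1)) → ℝ, Continuous f →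
      Integrable f (volume.restrict K) := fun f hf =>
    (hf.continuousOn.integrableOn_compact (isCompact_closedBall _ R)).mono_set hKR
  refine (hasDerivAt_integral_of_dominated_loc_of_lip (μ := volume.restrict K)
    (bound := fun x => ⟪x, w⟫) (s := Set.univ) Filter.univ_mem
    (Filter.Eventually.of_forall fun ε => ?_) (hI _ (by fun_prop)) ?_
    (Filter.Eventually.of_forall fun x => ?_) (hI _ (by fun_prop)) ?_).2
  · exact (hI _ (by fun_prop)).aestronglyMeasurable
  · apply AEStronglyMeasurable.indicator
    · exact (hI _ (by fun_prop)).aestronglyMeasurable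
    · exact (isClosed_le (by fun_prop) continuous_const).measurableSet
  · apply LipschitzOnWith.of_dist_le_mul
    intro a _ b _
    rw [Real.dist_eq, Real.dist_eq]
    refine (abs_max_sub_max_le_abs _ _ _).trans ?_
    rw [Real.coe_nnabs, ← abs_mul, inner_add_right, inner_add_right, real_inner_smul_right,
      real_inner_smul_right]
    rw [← abs_neg]
    apply le_of_eq
    congr 1
    ring
  · apply ae_restrict_of_ae
    filter_upwards [null_hyperplane hv] with x hx
    have hc : Continuous fun ε : ℝ => ⟪x, v + ε • w⟫ := by fun_prop
    have h0 : ⟪x, v + (0:ℝ) • w⟫ = ⟪x, v⟫ := by simp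
    rcases lt_or_gt_of_ne hx with hlt | hgt
    · have hev : ∀ᶠ ε in nhds (0:ℝ), ⟪x, v + ε • w⟫ < 1 :=
        (hc.tendsto 0).eventually_lt_const (by rw [h0]; exact hlt)
      rw [Set.indicator_of_mem (show x ∈ {x | ⟪x, v⟫ ≤ 1} from hlt.le)]
      have hd : HasDerivAt (fun ε : ℝ => 1 - ⟪x, v⟫ - ε * ⟪x, w⟫) (- ⟪x, w⟫) 0 := by
        simpa using ((hasDerivAt_id (0:ℝ)).mul_const ⟪x, w⟫).const_sub (1 - ⟪x, v⟫)
      refine hd.congr_of_eventuallyEq ?_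
      filter_upwards [hev] with ε hε
      rw [max_eq_left (by linarith), inner_add_right, real_inner_smul_right]
      ring
    · have hev : ∀ᶠ ε in nhds (0:ℝ), 1 < ⟪x, v + ε • w⟫ :=
        (hc.tendsto 0).eventually_const_lt (by rw [h0]; exact hgt)
      rw [Set.indicator_of_notMem (show x ∉ {x | ⟪x, v⟫ ≤ 1} from not_le.2 hgt)]
      refine (hasDerivAt_const (0:ℝ) (0:ℝ)).congr_of_eventuallyEq ?_
      filter_upwards [hev] with ε hε
      rw [max_eq_right (by linarith)]

lemma slice_eq {n : ℕ} {C : Set (EuclideanSpace ℝ (Fin (n+1)))} (hCo : IsOpen C)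
    {v : EuclideanSpace ℝ (Fin (n+1))} (hv0 : v ≠ 0) {c R : ℝ} (hc : 0 < c) (hR : 1 / c ≤ R)
    (h : ∀ x ∈ closure C, c * ‖x‖ ≤ ⟪x, v⟫) :
    C ∩ {y | ⟪y, v⟫ ∈ Set.Ioc (0:ℝ) 1} = (C ∩ Metric.closedBall 0 R) ∩ {x | ⟪x, v⟫ ≤ 1} := by
  have h0 : (0 : EuclideanSpace ℝ (Fin (n+1))) ∉ C := by
    intro h0
    obtain ⟨r, hr, hrC⟩ := Metric.isOpen_iff.1 hCo _ h0
    have hn : 0 < ‖v‖ := norm_pos_iff.2 hv0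
    have h1 := h (-(r / 2 * ‖v‖⁻¹) • v) (subset_closure (hrC (by
      rw [mem_ball_zero_iff, norm_smul, norm_neg, Real.norm_eq_abs,
        abs_of_pos (by positivity), mul_assoc, inv_mul_cancel₀ hn.ne']
      linarith)))
    rw [real_inner_smul_left, real_inner_self_eq_norm_sq] at h1
    have h2 : 0 ≤ c * ‖-(r / 2 * ‖v‖⁻¹) • v‖ := by positivity
    have h3 : 0 < (r / 2 * ‖v‖⁻¹) * ‖v‖ ^ 2 := by positivity
    linarith
  ext x
  constructor
  · rintro ⟨hx, hx1, hx2⟩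
    refine ⟨⟨hx, ?_⟩, hx2⟩
    rw [mem_closedBall_zero_iff]
    refine le_trans ?_ hR
    rw [le_div_iff₀ hc]
    have := h x (subset_closure hx)
    linarith
  · rintro ⟨⟨hx, -⟩, hx2⟩
    refine ⟨hx, ?_, hx2⟩
    have hxn : 0 < ‖x‖ := norm_pos_iff.2 (by rintro rfl; exact h0 hx)
    exact lt_of_lt_of_le (by positivity) (h x (subset_closure hx))

end CentroidAux

/-- **Any point is the centroid in a suitable affine patch.** Let `Ω = P(C)` be an open
properly convex domain in `RP^n` and `p = [x₀] ∈ Ω`.  Then there is an affine patch,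
i.e. a linear functional `⟪·, v⟫` positive on `cl(C) \ {0}` (so the hyperplane
`P(ker ⟪·,v⟫)` is disjoint from `cl Ω`), in which `p` is the centroid of `Ω`.  In cone
terms: the centroid of the affine slice `C ∩ {⟪·,v⟫ = 1}` lies on the ray of `x₀`,
equivalently the (vector-valued) centroid of the solid `C ∩ {0 < ⟪·,v⟫ ≤ 1}` lies on
the ray of `x₀`. -/
theorem exists_affine_patch_with_centroid (n : ℕ)
    (C : Set (EuclideanSpace ℝ (Fin (n+1))))
    (hCo : IsOpen C) (hCc : IsCone C) (hconv : Convex ℝ C) (hsharp : IsSharp C)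
    (hne : C.Nonempty) (x₀ : EuclideanSpace ℝ (Fin (n+1))) (hx₀ : x₀ ∈ C) :
    ∃ v : EuclideanSpace ℝ (Fin (n+1)),
      (∀ x ∈ closure C, x ≠ 0 → 0 < ⟪x, v⟫) ∧
      ∃ t : ℝ, 0 < t ∧
        (∫ x in C ∩ {y | ⟪y, v⟫ ∈ Set.Ioc (0:ℝ) 1}, x) = t • x₀ := by
  classical
  open CentroidAux in
  obtain ⟨v, hvD, hpos, hmin⟩ : ∃ v, v ∈ D C x₀ ∧ (∀ x ∈ closure C, x ≠ 0 → 0 < ⟪x, v⟫) ∧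
      ∀ u ∈ D C x₀, H C v ≤ H C u := by
    obtain ⟨v₀, hv₀⟩ := exists_dual hCc hconv hsharp hne
    have hx₀v : 0 ≤ ⟪x₀, v₀⟫ := by
      by_cases h : x₀ = 0
      · simp [h]
      · exact (hv₀ x₀ (subset_closure hx₀) h).le
    obtain ⟨c₀, hc₀, hc₀'⟩ := exists_lower hCc hv₀
    have hx₀0 : x₀ ≠ 0 := by
      rintro rfl
      obtain ⟨r, hr, hrC⟩ := Metric.isOpen_iff.1 hCo _ hx₀
      obtain ⟨e, he⟩ := exists_norm_eq (EuclideanSpace ℝ (Fin (n+1))) (c := r / 2) (by positivity)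
      refine hsharp e ?_ (subset_closure (hrC ?_)) (subset_closure (hrC ?_))
      · rw [← norm_pos_iff, he]; positivity
      · rw [mem_ball_zero_iff, he]; linarith
      · rw [mem_ball_zero_iff, norm_neg, he]; linarith
    have hp : 0 < ⟪x₀, v₀⟫ := hv₀ x₀ (subset_closure hx₀) hx₀0
    have hv₁ : ∀ x ∈ closure C, x ≠ 0 → 0 < ⟪x, (⟪x₀, v₀⟫)⁻¹ • v₀⟫ := by
      intro x hx hx0
      rw [real_inner_smul_right]
      exact mul_pos (inv_pos.2 hp) (hv₀ x hx hx0)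
    have hv₁D : (⟪x₀, v₀⟫)⁻¹ • v₀ ∈ D C x₀ := by
      refine ⟨?_, fun y hy => ?_⟩
      · rw [real_inner_smul_right, inv_mul_cancel₀ hp.ne']
      · by_cases h : y = 0
        · simp [h]
        · exact (hv₁ y hy h).le
    obtain ⟨v, hvD, hmin⟩ := ((H_lsc C).lowerSemicontinuousOn (D C x₀)).exists_isMinOn
      ⟨_, hv₁D⟩ (D_compact hCo hx₀)
    rw [isMinOn_iff] at hmin
    refine ⟨v, hvD, ?_, hmin⟩
    intro x hx hx0
    refine lt_of_le_of_ne (hvD.2 x hx) fun h => ?_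
    have htop := H_top hCo hCc hconv hx₀ hvD.1 hx hx0 h.symm
    have hle := hmin _ hv₁D
    obtain ⟨c, hc, hc'⟩ := exists_lower hCc hv₁
    rw [htop, H_eq hCo hc hc'] at hle
    exact absurd hle (not_le.2 ENNReal.ofReal_lt_top)
  refine ⟨v, hpos, ?_⟩
  obtain ⟨c, hc, hcv⟩ := CentroidAux.exists_lower hCc hpos
  have hv1 : ⟪x₀, v⟫ = 1 := hvD.1
  have hv0 : v ≠ 0 := by
    rintro rfl
    simp at hv1
  have hslice := CentroidAux.slice_eq hCo hv0 hc (R := 1 / (c / 2))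
    (one_div_le_one_div_of_le (by positivity) (by linarith)) hcv
  set A := C ∩ {y | ⟪y, v⟫ ∈ Set.Ioc (0:ℝ) 1} with hA
  have hAm : MeasurableSet A := by
    rw [hslice]
    exact (hCo.measurableSet.inter Metric.isClosed_closedBall.measurableSet).inter
      (isClosed_le (by fun_prop) continuous_const).measurableSet
  have hAint : IntegrableOn (fun x : EuclideanSpace ℝ (Fin (n+1)) => x) A := by
    refine (continuous_id.continuousOn.integrableOn_compact
      (isCompact_closedBall (0 : EuclideanSpace ℝ (Fin (n+1))) (1 / (c / 2)))).mono_set ?_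
    rw [hslice]
    exact fun x hx => hx.1.2
  have hinner : ∀ w, ⟪∫ x in A, x, w⟫ = ∫ x in A, ⟪x, w⟫ := by
    intro w
    rw [real_inner_comm, ← integral_inner hAint]
    simp_rw [real_inner_comm]
  have horth : ∀ w, ⟪x₀, w⟫ = 0 → ⟪∫ x in A, x, w⟫ = 0 := by
    intro w hw
    have hder := CentroidAux.deriv_g (K := C ∩ Metric.closedBall 0 (1 / (c / 2)))
      Set.inter_subset_right hv1 w
    have hbound : ∀ᶠ ε in nhds (0:ℝ), ∀ x ∈ closure C, c / 2 * ‖x‖ ≤ ⟪x, v + ε • w⟫ := by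
      have : ∀ᶠ ε in nhds (0:ℝ), |ε| * ‖w‖ < c / 2 := by
        have hcont : Continuous fun ε : ℝ => |ε| * ‖w‖ := by fun_prop
        exact (hcont.tendsto 0).eventually_lt_const (by simpa using hc)
      filter_upwards [this] with ε hε x hx
      rw [inner_add_right]
      have h1 := hcv x hx
      have h2 := (abs_le.1 (abs_real_inner_le_norm x (ε • w))).1
      rw [norm_smul, Real.norm_eq_abs] at h2
      nlinarith [norm_nonneg x]
    have hlm : IsLocalMin (fun ε : ℝ => ∫ x in C ∩ Metric.closedBall 0 (1 / (c / 2)),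
        max (1 - ⟪x, v + ε • w⟫) 0) 0 := by
      have hb0 := hbound.self_of_nhds
      filter_upwards [hbound] with ε hε
      have hmem : v + ε • w ∈ CentroidAux.D C x₀ := by
        refine ⟨?_, fun y hy => le_trans (by positivity) (hε y hy)⟩
        rw [inner_add_right, real_inner_smul_right, hv1, hw]
        simp
      have h1 := hmin _ hmem
      have e0 : v = v + (0:ℝ) • w := by simp
      rw [CentroidAux.H_eq hCo (half_pos hc) hε, e0,
        CentroidAux.H_eq hCo (half_pos hc) hb0, ← e0] at h1
      have h2 := (ENNReal.ofReal_le_ofReal_iff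
        (integral_nonneg (fun x => le_max_right (1 - ⟪x, v + ε • w⟫) 0))).1 h1
      rw [← e0]
      exact h2
    have hz := hlm.hasDerivAt_eq_zero hder
    rw [setIntegral_indicator (isClosed_le (by fun_prop) continuous_const).measurableSet,
      ← hslice, integral_neg, neg_eq_zero] at hz
    rw [hinner, hz]
  set I := ∫ x in A, x with hI
  have hx₀0 : x₀ ≠ 0 := by
    rintro rfl
    simp at hv1
  have hn : 0 < ⟪x₀, x₀⟫ := real_inner_self_pos.2 hx₀0
  have hIeq : I = (⟪x₀, I⟫ / ⟪x₀, x₀⟫) • x₀ := by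
    set t := ⟪x₀, I⟫ / ⟪x₀, x₀⟫ with ht
    have h1 : ⟪x₀, I - t • x₀⟫ = 0 := by
      rw [inner_sub_right, real_inner_smul_right, ht, div_mul_cancel₀ _ hn.ne', sub_self]
    have h2 := horth _ h1
    have h3 : ⟪I - t • x₀, I - t • x₀⟫ = 0 := by
      rw [inner_sub_left, h2, real_inner_smul_left, h1]
      simp
    exact sub_eq_zero.1 (inner_self_eq_zero.1 h3)
  refine ⟨_, ?_, hIeq⟩
  have hIv : 0 < ⟪I, v⟫ := by
    rw [hinner, setIntegral_pos_iff_support_of_nonneg_ae]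
    · have hsub : C ∩ {y | ⟪y, v⟫ < 1} ⊆ Function.support (fun x => ⟪x, v⟫) ∩ A := by
        rintro x ⟨hx, hx1⟩
        have hmem : x ∈ A := by
          have hxp : 0 < ⟪x, v⟫ := by
            have h2 : (1/2 : ℝ) • x ∈ C := CentroidAux.cone_smul hCc (by norm_num) hx
            refine hpos x (subset_closure hx) ?_
            rintro rfl
            obtain ⟨r, hr, hrC⟩ := Metric.isOpen_iff.1 hCo _ hx
            obtain ⟨e, he⟩ :=
              exists_norm_eq (EuclideanSpace ℝ (Fin (n+1))) (c := r / 2) (by positivity)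
            refine hsharp e ?_ (subset_closure (hrC ?_)) (subset_closure (hrC ?_))
            · rw [← norm_pos_iff, he]; positivity
            · rw [mem_ball_zero_iff, he]; linarith
            · rw [mem_ball_zero_iff, norm_neg, he]; linarith
          exact ⟨hx, hxp, le_of_lt hx1⟩
        exact ⟨hmem.2.1.ne', hmem⟩
      refine lt_of_lt_of_le ?_ (measure_mono hsub)
      refine (hCo.inter (isOpen_lt (by fun_prop) continuous_const)).measure_pos _
        ⟨(1/2 : ℝ) • x₀, CentroidAux.cone_smul hCc (by norm_num) hx₀, ?_⟩
      simp only [Set.mem_ofPred_eq, real_inner_smul_left, hv1]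
      norm_num
    · filter_upwards [ae_restrict_mem hAm] with x hx
      exact hx.2.1.le
    · exact hAint.inner_const v
  rw [hIeq, real_inner_smul_left, hv1, mul_one] at hIv
  exact hIv
end
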